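/- Suppose {q_0, …, q_{N−1}} is a strongly proper interpolation basis for the Birkhoff functionals L_1, …, L_N. Then for every fixed k with 1 ≤ k ≤ N and every j with 0 ≤ j ≤ k−2, the auxiliary polynomials satisfy the recursion g_{j,k−1} = g_{j−1,k−1} − (L_{j+1}(g_{j−1,k−1}) / L_{j+1}(g_{j−1,j})) · g_{j−1,j}, where the denominator L_{j+1}(g_{j−1,j}) is nonzero (for j = 0 the convention g_{−1,m} = q_m applies). -/

import Mathlib

open Polynomial Matrix

/-- The matrix `V_{k-1}` whose `(i,j)` entry is `L i (q j)`, for the first `k`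
functionals and polynomials. -/
noncomputable def Vmat {N : ℕ} (L : Fin N → (Polynomial ℝ →ₗ[ℝ] ℝ)) (q : Fin N → Polynomial ℝ)
    (k : ℕ) (hk : k ≤ N) : Matrix (Fin k) (Fin k) ℝ :=
  Matrix.of fun i j => L (Fin.castLE hk i) (q (Fin.castLE hk j))

/-- The auxiliary polynomial `g_{m-1, k}` (so `gAux L q m hm k` uses the first `m`
interpolation conditions; `gAux L q 0 _ k = q k` is the convention `g_{-1,k} = q k`). -/
noncomputable def gAux {N : ℕ} (L : Fin N → (Polynomial ℝ →ₗ[ℝ] ℝ)) (q : Fin N → Polynomial ℝ)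
    (m : ℕ) (hm : m ≤ N) (k : Fin N) : Polynomial ℝ :=
  q k - ∑ i : Fin m,
    (((Vmat L q m hm)⁻¹ *ᵥ fun i : Fin m => L (Fin.castLE hm i) (q k)) i) • q (Fin.castLE hm i)

/-! The remainder `g_{j-1,m}` is the only element of `q_m + span {q_0, …, q_{j-1}}` annihilated by
`L_1, …, L_j`. Subtracting from `g_{j-1,m}` the multiple of `g_{j-1,j}` that makes `L_{j+1}` vanish
keeps the first `j` functionals zero and only adds a multiple of `q_j` and of the earlier `q_i`, so
by uniqueness the result is `g_{j,m}`. The pivot `L_{j+1}(g_{j-1,j})` is the Schur complement of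
`V_{j-1}` in `V_j`, that is `det V_j / det V_{j-1}`. This is Gaussian elimination. -/

section Ring

variable {ι R M : Type*} [CommRing R] [AddCommGroup M] [Module R M]

/-- The generalized Vandermonde matrix of a family of functionals on a family of vectors, with
functionals indexing the rows; `Vmat` is the case of polynomials. -/
def interpolationMatrix (ℓ : ι → Module.Dual R M) (v : ι → M) : Matrix ι ι R :=
  Matrix.of fun i j => ℓ i (v j)

section Fintype

variable [Fintype ι]

theorem interpolationMatrix_mulVec_apply (ℓ : ι → Module.Dual R M) (v : ι → M) (c : ι → R) (i : ι) :
    (interpolationMatrix ℓ v *ᵥ c) i = ℓ i (∑ j, c j • v j) := by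
  simp [interpolationMatrix, mulVec, dotProduct, mul_comm]

variable [DecidableEq ι]

/-- The error `x - p` of the interpolant `p` of `x` in the span of the `v i`, where `p` is given by
`ℓ i p = ℓ i x` for all `i`; `gAux` is the case of polynomials. If the interpolation matrix is
not invertible, its `⁻¹` is the junk value `0` and the remainder is `x` itself. -/
noncomputable def interpolationRemainder (ℓ : ι → Module.Dual R M) (v : ι → M) (x : M) : M :=
  x - ∑ i, ((interpolationMatrix ℓ v)⁻¹ *ᵥ fun i => ℓ i x) i • v i

theorem sub_interpolationRemainder_mem_span (ℓ : ι → Module.Dual R M) (v : ι → M) (x : M) :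
    x - interpolationRemainder ℓ v x ∈ Submodule.span R (Set.range v) := by
  rw [interpolationRemainder, sub_sub_cancel]
  exact (Submodule.mem_span_range_iff_exists_fun R).2 ⟨_, rfl⟩

variable {ℓ : ι → Module.Dual R M} {v : ι → M}

theorem apply_interpolationRemainder (h : IsUnit (interpolationMatrix ℓ v).det) (x : M) (i : ι) :
    ℓ i (interpolationRemainder ℓ v x) = 0 := by
  rw [interpolationRemainder, map_sub, ← interpolationMatrix_mulVec_apply, mulVec_mulVec,
    mul_nonsing_inv _ h, one_mulVec, sub_self]

theorem eq_zero_of_mem_span_of_apply_eq_zero (h : IsUnit (interpolationMatrix ℓ v).det) {x : M}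
    (hx : x ∈ Submodule.span R (Set.range v)) (hℓ : ∀ i, ℓ i x = 0) : x = 0 := by
  obtain ⟨c, rfl⟩ := (Submodule.mem_span_range_iff_exists_fun R).1 hx
  have hmul : interpolationMatrix ℓ v *ᵥ c = 0 :=
    funext fun i => (interpolationMatrix_mulVec_apply ℓ v c i).trans (hℓ i)
  have hc : c = 0 := by
    rw [← one_mulVec c, ← nonsing_inv_mul _ h, ← mulVec_mulVec, hmul, mulVec_zero]
  simp [hc]

theorem interpolationRemainder_eq_of_sub_mem_span (h : IsUnit (interpolationMatrix ℓ v).det)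
    {x y : M} (hxy : x - y ∈ Submodule.span R (Set.range v)) (hy : ∀ i, ℓ i y = 0) :
    interpolationRemainder ℓ v x = y := by
  refine sub_eq_zero.1 (eq_zero_of_mem_span_of_apply_eq_zero h ?_ fun i => ?_)
  · rw [← sub_sub_sub_cancel_left _ _ x]
    exact sub_mem hxy (sub_interpolationRemainder_mem_span ℓ v x)
  · rw [map_sub, apply_interpolationRemainder h, hy, sub_zero]

end Fintype

theorem det_interpolationMatrix_succ {n : ℕ} {ℓ : Fin (n + 1) → Module.Dual R M}
    {v : Fin (n + 1) → M} (h : IsUnit (interpolationMatrix (Fin.init ℓ) (Fin.init v)).det) :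
    (interpolationMatrix ℓ v).det = (interpolationMatrix (Fin.init ℓ) (Fin.init v)).det *
      ℓ (Fin.last n) (interpolationRemainder (Fin.init ℓ) (Fin.init v) (v (Fin.last n))) := by
  let A := interpolationMatrix (Fin.init ℓ) (Fin.init v)
  let b : Fin n → R := fun i => Fin.init ℓ i (v (Fin.last n))
  let c : Fin n → R := fun j => ℓ (Fin.last n) (Fin.init v j)
  let d : R := ℓ (Fin.last n) (v (Fin.last n))
  have hblocks : (interpolationMatrix ℓ v).submatrix finSumFinEquiv finSumFinEquiv =
      fromBlocks A (replicateCol (Fin 1) b) (replicateRow (Fin 1) c) (of fun _ _ => d) :=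
    Matrix.ext fun
      | .inl _, .inl _ | .inl _, .inr 0 | .inr 0, .inl _ | .inr 0, .inr 0 => rfl
  have hschur : ℓ (Fin.last n) (interpolationRemainder (Fin.init ℓ) (Fin.init v) (v (Fin.last n))) =
      d - c ⬝ᵥ A⁻¹ *ᵥ b := by
    simp [interpolationRemainder, dotProduct, mul_comm, A, b, c, d]
  let := invertibleOfIsUnitDet A h
  rw [← det_submatrix_equiv_self finSumFinEquiv, hblocks, det_fromBlocks₁₁, hschur,
    invOf_eq_nonsing_inv, det_fin_one, Matrix.mul_assoc, ← replicateCol_mulVec]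
  rfl

end Ring

theorem birkhoff_auxiliary_recursion_general {K M : Type*} [Field K] [AddCommGroup M] [Module K M]
    {n : ℕ} {ℓ : Fin (n + 1) → Module.Dual K M} {v : Fin (n + 1) → M}
    (hinit : IsUnit (interpolationMatrix (Fin.init ℓ) (Fin.init v)).det)
    (h : IsUnit (interpolationMatrix ℓ v).det) (x : M) :
    ℓ (Fin.last n) (interpolationRemainder (Fin.init ℓ) (Fin.init v) (v (Fin.last n))) ≠ 0 ∧
      interpolationRemainder ℓ v x = interpolationRemainder (Fin.init ℓ) (Fin.init v) x -
        (ℓ (Fin.last n) (interpolationRemainder (Fin.init ℓ) (Fin.init v) x) /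
            ℓ (Fin.last n) (interpolationRemainder (Fin.init ℓ) (Fin.init v) (v (Fin.last n)))) •
          interpolationRemainder (Fin.init ℓ) (Fin.init v) (v (Fin.last n)) := by
  set g := interpolationRemainder (Fin.init ℓ) (Fin.init v)
  have hpivot : ℓ (Fin.last n) (g (v (Fin.last n))) ≠ 0 :=
    right_ne_zero_of_mul (det_interpolationMatrix_succ hinit ▸ h.ne_zero)
  have hspan (y : M) : y - g y ∈ Submodule.span K (Set.range v) :=
    Submodule.span_mono (Set.range_comp_subset_range Fin.castSucc v)
      (sub_interpolationRemainder_mem_span (Fin.init ℓ) (Fin.init v) y)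
  have hpivot_mem : g (v (Fin.last n)) ∈ Submodule.span K (Set.range v) := by
    simpa using sub_mem (Submodule.subset_span (Set.mem_range_self (Fin.last n)))
      (hspan (v (Fin.last n)))
  refine ⟨hpivot, interpolationRemainder_eq_of_sub_mem_span h ?_ fun i => ?_⟩
  · rw [← sub_add]
    exact add_mem (hspan x) (Submodule.smul_mem _ _ hpivot_mem)
  · rw [map_sub, map_smul, smul_eq_mul]
    refine Fin.lastCases ?_ (fun i => ?_) i
    · rw [div_mul_cancel₀ _ hpivot, sub_self]
    · have hzero (y : M) : ℓ i.castSucc (g y) = 0 := apply_interpolationRemainder hinit y i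
      rw [hzero, hzero, mul_zero, sub_zero]

/-- for a strongly proper interpolation basis `q` for Birkhoff functionals `L`,
the auxiliary polynomials satisfy, for `1 ≤ k ≤ N` and `0 ≤ j ≤ k-2`,
`g_{j,k-1} = g_{j-1,k-1} - (L_{j+1}(g_{j-1,k-1}) / L_{j+1}(g_{j-1,j})) • g_{j-1,j}`,
the denominator being nonzero. -/
theorem birkhoff_auxiliary_recursion
    (N : ℕ) (hN : 1 ≤ N) (z : Fin N → ℝ) (α : Fin N → ℕ)
    (L : Fin N → (Polynomial ℝ →ₗ[ℝ] ℝ))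
    (hL : ∀ (i : Fin N) (p : Polynomial ℝ),
      L i p = Polynomial.eval (z i) (Polynomial.derivative^[α i] p))
    (q : Fin N → Polynomial ℝ)
    (hq : ∀ (k : ℕ) (hk : k ≤ N), IsUnit (Vmat L q k hk).det) :
    ∀ (k : ℕ) (hk1 : 1 ≤ k) (hk : k ≤ N) (j : ℕ) (hj : j + 2 ≤ k),
      L ⟨j, by omega⟩ (gAux L q j (by omega) ⟨j, by omega⟩) ≠ 0 ∧
      gAux L q (j + 1) (by omega) ⟨k - 1, by omega⟩ =
        gAux L q j (by omega) ⟨k - 1, by omega⟩ -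
          (L ⟨j, by omega⟩ (gAux L q j (by omega) ⟨k - 1, by omega⟩) /
              L ⟨j, by omega⟩ (gAux L q j (by omega) ⟨j, by omega⟩)) •
            gAux L q j (by omega) ⟨j, by omega⟩ := by
  intro k _ hk j hj
  exact birkhoff_auxiliary_recursion_general (ℓ := fun i : Fin (j + 1) => L (i.castLE (by omega)))
    (v := fun i => q (i.castLE (by omega))) (hq j (by omega)) (hq (j + 1) (by omega)) _
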